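/- arXiv:2210.12869 — 4 statements merged into one kernel-verified Lean document; each statement's English description precedes it below -/
import Mathlib

section
/- The supremum of 1 − TV(P_0, P_1) over P_0 ∈ 𝒫_0^η and P_1 ∈ 𝒫_1^η is attained: there exist P_0* ∈ 𝒫_0^η and P_1* ∈ 𝒫_1^η such that 1 − TV(P_0*, P_1*) = sup_{P_0 ∈ 𝒫_0^η, P_1 ∈ 𝒫_1^η} (1 − TV(P_0, P_1)). This follows from weak compactness of 𝒫_0^η and 𝒫_1^η and upper semicontinuity of (P_0,P_1) ↦ 1 − TV(P_0,P_1) with respect to weak convergence. -/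
open MeasureTheory

/-- The total variation distance between two measures:
`TV(P, Q) = sup over measurable sets A of |P(A) − Q(A)|`. -/
noncomputable def tv {Ω : Type*} [MeasurableSpace Ω] (P Q : Measure Ω) : ℝ :=
  ⨆ A : {A : Set Ω // MeasurableSet A}, |(P A.1).toReal - (Q A.1).toReal|

/-- The moment-constrained uncertainty set around nominal `Qhat` with radius `η`. -/
def momentSet {d : ℕ} (X : Set (EuclideanSpace ℝ (Fin d))) {K : ℕ}
    (ψ : Fin K → X → ℝ) (Qhat : ProbabilityMeasure X) (η : ℝ) :
    Set (ProbabilityMeasure X) :=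
  {P | ∀ k, |∫ x, ψ k x ∂(P : Measure X) - ∫ x, ψ k x ∂(Qhat : Measure X)| ≤ η}

section TotalVariation

open Filter Topology

variable {Ω : Type*} [MeasurableSpace Ω]

lemma abs_measureReal_sub_le_tv (P Q : Measure Ω) [IsProbabilityMeasure P]
    [IsProbabilityMeasure Q] {A : Set Ω} (hA : MeasurableSet A) :
    |P.real A - Q.real A| ≤ tv P Q := by
  refine le_ciSup (f := fun A : {A : Set Ω // MeasurableSet A} ↦
    |(P A.1).toReal - (Q A.1).toReal|) ⟨1, ?_⟩ ⟨A, hA⟩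
  rintro _ ⟨B, rfl⟩
  change |P.real B.1 - Q.real B.1| ≤ 1
  have hP : P.real B.1 ≤ 1 := measureReal_le_one
  have hQ : Q.real B.1 ≤ 1 := measureReal_le_one
  have hP0 : 0 ≤ P.real B.1 := measureReal_nonneg
  have hQ0 : 0 ≤ Q.real B.1 := measureReal_nonneg
  exact abs_le.2 ⟨by linarith, by linarith⟩

/-- Integrals of a measurable `[0, 1]`-valued function differ by at most the total variation. -/
lemma abs_integral_sub_integral_le_tv (P Q : Measure Ω) [IsProbabilityMeasure P]
    [IsProbabilityMeasure Q] {f : Ω → ℝ} (hf : Measurable f) (hf0 : ∀ x, 0 ≤ f x)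
    (hf1 : ∀ x, f x ≤ 1) : |∫ x, f x ∂P - ∫ x, f x ∂Q| ≤ tv P Q := by
  have layer (μ : Measure Ω) [IsProbabilityMeasure μ] :
      ∫ x, f x ∂μ = ∫ t in (0 : ℝ)..1, μ.real {x | t ≤ f x} := by
    have hint : Integrable f μ :=
      Integrable.of_bound hf.aestronglyMeasurable 1
        (.of_forall fun x ↦ by rw [Real.norm_of_nonneg (hf0 x)]; exact hf1 x)
    rw [intervalIntegral.integral_of_le zero_le_one,
      hint.integral_eq_integral_Ioc_meas_le (.of_forall hf0) (.of_forall hf1)]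
  have meas (μ : Measure Ω) [IsProbabilityMeasure μ] :
      IntervalIntegrable (fun t ↦ μ.real {x | t ≤ f x}) volume 0 1 := by
    refine Antitone.intervalIntegrable fun s t hst ↦ ?_
    exact measureReal_mono fun x hx ↦ hst.trans hx
  rw [layer P, layer Q, ← intervalIntegral.integral_sub (meas P) (meas Q)]
  simpa using intervalIntegral.norm_integral_le_of_norm_le_const (a := 0) (b := 1)
    (f := fun t ↦ P.real {x | t ≤ f x} - Q.real {x | t ≤ f x}) (C := tv P Q)
    fun t _ ↦ abs_measureReal_sub_le_tv P Q (measurableSet_le measurable_const hf)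

variable [PseudoEMetricSpace Ω] [BorelSpace Ω]

/-- A value below the total variation is exceeded on a closed set. -/
lemma exists_isClosed_lt_abs_measureReal_sub (P Q : Measure Ω) [IsProbabilityMeasure P]
    [IsProbabilityMeasure Q] {c : ℝ} (hc : c < tv P Q) :
    ∃ F : Set Ω, IsClosed F ∧ c < |P.real F - Q.real F| := by
  have : Nonempty {A : Set Ω // MeasurableSet A} := ⟨⟨∅, .empty⟩⟩
  obtain ⟨⟨A, hA⟩, hcA⟩ := exists_lt_of_lt_ciSup hc
  change c < |P.real A - Q.real A| at hcA
  set ε := |P.real A - Q.real A| - c with hε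
  have hε0 : 0 < ε := sub_pos.2 hcA
  obtain ⟨F, hFA, hF, hlt⟩ := hA.exists_isClosed_sdiff_lt (μ := P + Q) (by finiteness)
    (ENNReal.ofReal_pos.2 hε0).ne'
  refine ⟨F, hF, ?_⟩
  have hsum : (P + Q).real (A \ F) < ε := (ENNReal.lt_ofReal_iff_toReal_lt (by finiteness)).1 hlt
  rw [measureReal_add_apply, measureReal_sdiff hFA hF.measurableSet,
    measureReal_sdiff hFA hF.measurableSet] at hsum
  have hP : P.real F ≤ P.real A := measureReal_mono hFA
  have hQ : Q.real F ≤ Q.real A := measureReal_mono hFA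
  have := abs_sub_abs_le_abs_sub (P.real A - Q.real A) (P.real F - Q.real F)
  have : |P.real A - Q.real A - (P.real F - Q.real F)| < ε :=
    abs_lt.2 ⟨by linarith, by linarith⟩
  linarith

/-- Total variation is lower semicontinuous for weak convergence of probability measures. -/
lemma lowerSemicontinuous_tv : LowerSemicontinuous
    fun p : ProbabilityMeasure Ω × ProbabilityMeasure Ω ↦ tv (p.1 : Measure Ω) p.2 := by
  rintro ⟨P, Q⟩ c hc
  obtain ⟨F, hF, hcF⟩ := exists_isClosed_lt_abs_measureReal_sub _ _ hc
  have hδ : ∀ n : ℕ, (0 : ℝ) < 1 / (n + 1) := fun n ↦ by positivity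
  have hlim (μ : ProbabilityMeasure Ω) := tendsto_integral_thickenedIndicator_of_isClosed
    (μ : Measure Ω) hF hδ tendsto_one_div_add_atTop_nhds_zero_nat
  obtain ⟨n, hn⟩ := (((hlim P).sub (hlim Q)).abs.eventually_const_lt hcF).exists
  let f := thickenedIndicator (hδ n) F
  have hcont : Continuous fun μ : ProbabilityMeasure Ω ↦ ∫ x, (f x : ℝ) ∂(μ : Measure Ω) :=
    ProbabilityMeasure.continuous_integral_boundedContinuousFunction
      (BoundedContinuousFunction.mkOfBound ⟨fun x ↦ (f x : ℝ), by fun_prop⟩ 1 fun x y ↦ by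
        rw [Real.dist_eq]
        have hx : (f x : ℝ) ≤ 1 := thickenedIndicator_le_one (hδ n) F x
        have hy : (f y : ℝ) ≤ 1 := thickenedIndicator_le_one (hδ n) F y
        exact abs_le.2 ⟨by simp; linarith [(f x).2], by simp; linarith [(f y).2]⟩)
  have hdiff : Continuous fun p : ProbabilityMeasure Ω × ProbabilityMeasure Ω ↦
      |∫ x, (f x : ℝ) ∂(p.1 : Measure Ω) - ∫ x, (f x : ℝ) ∂(p.2 : Measure Ω)| :=
    ((hcont.comp continuous_fst).sub (hcont.comp continuous_snd)).abs
  filter_upwards [hdiff.continuousAt.eventually_const_lt hn] with p hp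
  exact hp.trans_le <| abs_integral_sub_integral_le_tv _ _
    (f.continuous.measurable.coe_nnreal_real) (fun x ↦ (f x).2)
    fun x ↦ thickenedIndicator_le_one (hδ n) F x

end TotalVariation

lemma isClosed_momentSet {d : ℕ} {X : Set (EuclideanSpace ℝ (Fin d))} (hX : IsCompact X)
    {K : ℕ} {ψ : Fin K → X → ℝ} (hψ : ∀ k, Continuous (ψ k)) (Q : ProbabilityMeasure X)
    (η : ℝ) : IsClosed (momentSet X ψ Q η) := by
  have : CompactSpace X := isCompact_iff_compactSpace.1 hX
  have hcont (k : Fin K) : Continuous fun P : ProbabilityMeasure X ↦ ∫ x, ψ k x ∂(P : Measure X) :=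
    ProbabilityMeasure.continuous_integral_boundedContinuousFunction
      (BoundedContinuousFunction.mkOfCompact ⟨ψ k, hψ k⟩)
  simp only [momentSet, Set.ofPred_forall]
  exact isClosed_iInter fun k ↦
    isClosed_le ((hcont k).sub continuous_const).abs continuous_const

/-- The supremum of `1 − TV(P₀, P₁)` over `P₀ ∈ 𝒫₀^η`, `P₁ ∈ 𝒫₁^η`
is attained at some pair `(P₀*, P₁*)`. -/
theorem sup_one_sub_tv_attained
    {d : ℕ} (X : Set (EuclideanSpace ℝ (Fin d))) (hX : IsCompact X)
    {K : ℕ} (ψ : Fin K → X → ℝ) (hψ : ∀ k, Continuous (ψ k))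
    (Q0 Q1 : ProbabilityMeasure X) (η : ℝ) (hη : 0 < η) :
    ∃ P0s ∈ momentSet X ψ Q0 η, ∃ P1s ∈ momentSet X ψ Q1 η,
      1 - tv (P0s : Measure X) (P1s : Measure X) =
        sSup {r : ℝ | ∃ P0 ∈ momentSet X ψ Q0 η, ∃ P1 ∈ momentSet X ψ Q1 η,
          r = 1 - tv (P0 : Measure X) (P1 : Measure X)} := by
  have : CompactSpace X := isCompact_iff_compactSpace.1 hX
  have self_mem (Q : ProbabilityMeasure X) : Q ∈ momentSet X ψ Q η := fun k ↦ by simpa using hη.le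
  have hne : (momentSet X ψ Q0 η ×ˢ momentSet X ψ Q1 η).Nonempty :=
    ⟨(Q0, Q1), self_mem Q0, self_mem Q1⟩
  obtain ⟨⟨P0, P1⟩, ⟨h0, h1⟩, hmin⟩ := LowerSemicontinuousOn.exists_isMinOn hne
    ((isClosed_momentSet hX hψ Q0 η).isCompact.prod (isClosed_momentSet hX hψ Q1 η).isCompact)
    (lowerSemicontinuous_tv.lowerSemicontinuousOn _)
  refine ⟨P0, h0, P1, h1, Eq.symm <| IsGreatest.csSup_eq ?_⟩
  refine ⟨⟨P0, h0, P1, h1, rfl⟩, ?_⟩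
  rintro _ ⟨R0, hR0, R1, hR1, rfl⟩
  exact sub_le_sub_left (hmin (Set.mk_mem_prod hR0 hR1)) 1
end

section
/- The optimal minimax Bayes error of the robust hypothesis-testing problem equals half the worst-case affinity: inf_φ sup_{P_0 ∈ 𝒫_0^η, P_1 ∈ 𝒫_1^η} P_E(φ; P_0, P_1) = (1/2) sup_{P_0 ∈ 𝒫_0^η, P_1 ∈ 𝒫_1^η} (1 − TV(P_0, P_1)), where the infimum is over all measurable tests φ : X → [0,1]; equivalently, when P_0 and P_1 have densities p_0, p_1 with respect to a common reference measure μ, the right-hand side equals (1/2) sup ∫_X min{p_0(x), p_1(x)} dμ(x). -/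
open MeasureTheory

/-- The Bayes error with equal priors of a (randomized) test `φ` under `(P₀, P₁)`. -/
noncomputable def bayesError {Ω : Type*} [MeasurableSpace Ω]
    (φ : Ω → ℝ) (P0 P1 : Measure Ω) : ℝ :=
  (1 / 2) * ∫ x, φ x ∂P0 + (1 / 2) * ∫ x, (1 - φ x) ∂P1

section TotalVariation

variable {Ω : Type*} [MeasurableSpace Ω]

lemma abs_measure_sub_le_one (P Q : Measure Ω) [IsProbabilityMeasure P] [IsProbabilityMeasure Q]
    (A : Set Ω) : |(P A).toReal - (Q A).toReal| ≤ 1 := by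
  have hP : (P A).toReal ≤ 1 := measureReal_le_one (μ := P) (s := A)
  have hQ : (Q A).toReal ≤ 1 := measureReal_le_one (μ := Q) (s := A)
  have hP0 : 0 ≤ (P A).toReal := ENNReal.toReal_nonneg
  have hQ0 : 0 ≤ (Q A).toReal := ENNReal.toReal_nonneg
  exact abs_le.2 ⟨by linarith, by linarith⟩

lemma abs_measure_sub_le_tv (P Q : Measure Ω) [IsProbabilityMeasure P] [IsProbabilityMeasure Q]
    {A : Set Ω} (hA : MeasurableSet A) : |(P A).toReal - (Q A).toReal| ≤ tv P Q :=
  le_ciSup (f := fun A : {A : Set Ω // MeasurableSet A} => |(P A.1).toReal - (Q A.1).toReal|)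
    ⟨1, by rintro _ ⟨A, rfl⟩; exact abs_measure_sub_le_one P Q A.1⟩ ⟨A, hA⟩

lemma tv_le_of_forall {P Q : Measure Ω} {c : ℝ}
    (h : ∀ A, MeasurableSet A → |(P A).toReal - (Q A).toReal| ≤ c) : tv P Q ≤ c :=
  haveI : Nonempty {A : Set Ω // MeasurableSet A} := ⟨⟨∅, .empty⟩⟩
  ciSup_le fun A => h A.1 A.2

lemma tv_nonneg (P Q : Measure Ω) : 0 ≤ tv P Q :=
  Real.iSup_nonneg fun _ => abs_nonneg _

lemma tv_le_one (P Q : Measure Ω) [IsProbabilityMeasure P] [IsProbabilityMeasure Q] :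
    tv P Q ≤ 1 :=
  tv_le_of_forall fun A _ => abs_measure_sub_le_one P Q A

lemma tv_self (P : Measure Ω) : tv P P = 0 :=
  le_antisymm (tv_le_of_forall fun A _ => by simp) (tv_nonneg P P)

lemma integrable_of_mem_Icc (P : Measure Ω) [IsFiniteMeasure P] {φ : Ω → ℝ}
    (hφ : Measurable φ) (h01 : ∀ x, φ x ∈ Set.Icc (0 : ℝ) 1) : Integrable φ P :=
  Integrable.of_bound hφ.aestronglyMeasurable 1 <| .of_forall fun x => by
    rw [Real.norm_eq_abs, abs_of_nonneg (h01 x).1]; exact (h01 x).2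

lemma integral_sub_integral_le_tv (P Q : Measure Ω) [IsProbabilityMeasure P]
    [IsProbabilityMeasure Q] {φ : Ω → ℝ} (hφ : Measurable φ)
    (h01 : ∀ x, φ x ∈ Set.Icc (0 : ℝ) 1) :
    ∫ x, φ x ∂Q - ∫ x, φ x ∂P ≤ tv P Q := by
  obtain ⟨s, hs, hle, hge⟩ := hahn_decomposition Q P
  have hrs : P.restrict s ≤ Q.restrict s := Measure.le_iff.2 fun t ht => by
    rw [Measure.restrict_apply ht, Measure.restrict_apply ht]
    exact hle _ (ht.inter hs) Set.inter_subset_right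
  have hrc : Q.restrict sᶜ ≤ P.restrict sᶜ := Measure.le_iff.2 fun t ht => by
    rw [Measure.restrict_apply ht, Measure.restrict_apply ht]
    exact hge _ (ht.inter hs.compl) Set.inter_subset_right
  have hint : ∀ (R : Measure Ω) [IsFiniteMeasure R], Integrable φ R := fun R _ =>
    integrable_of_mem_Icc R hφ h01
  have h₁ : ∫ x in s, (1 - φ x) ∂P ≤ ∫ x in s, (1 - φ x) ∂Q :=
    integral_mono_measure hrs (.of_forall fun x => sub_nonneg.2 (h01 x).2)
      ((integrable_const 1).sub (hint _))
  have h₂ : ∫ x in sᶜ, φ x ∂Q ≤ ∫ x in sᶜ, φ x ∂P :=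
    integral_mono_measure hrc (.of_forall fun x => (h01 x).1) (hint _)
  rw [integral_sub (integrable_const 1) (hint _), integral_sub (integrable_const 1) (hint _)] at h₁
  simp only [integral_const, measureReal_restrict_apply_univ, smul_eq_mul, mul_one] at h₁
  have htv := (abs_le.1 (abs_measure_sub_le_tv P Q hs)).1
  change -tv P Q ≤ P.real s - Q.real s at htv
  rw [← integral_add_compl hs (hint P), ← integral_add_compl hs (hint Q)]
  linarith

lemma half_affinity_le_bayesError (P Q : Measure Ω) [IsProbabilityMeasure P]
    [IsProbabilityMeasure Q] {φ : Ω → ℝ} (hφ : Measurable φ)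
    (h01 : ∀ x, φ x ∈ Set.Icc (0 : ℝ) 1) :
    1 / 2 * (1 - tv P Q) ≤ bayesError φ P Q := by
  have h := integral_sub_integral_le_tv P Q hφ h01
  rw [bayesError, integral_sub (integrable_const 1) (integrable_of_mem_Icc Q hφ h01)]
  simp only [integral_const, probReal_univ, smul_eq_mul, mul_one]
  linarith

lemma bayesError_le_one (P Q : Measure Ω) [IsProbabilityMeasure P]
    [IsProbabilityMeasure Q] {φ : Ω → ℝ} (hφ : Measurable φ)
    (h01 : ∀ x, φ x ∈ Set.Icc (0 : ℝ) 1) : bayesError φ P Q ≤ 1 := by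
  have hP : ∫ x, φ x ∂P ≤ ∫ _, 1 ∂P :=
    integral_mono (integrable_of_mem_Icc P hφ h01) (integrable_const 1) fun x => (h01 x).2
  have hQ : 0 ≤ ∫ x, φ x ∂Q := integral_nonneg fun x => (h01 x).1
  rw [bayesError, integral_sub (integrable_const 1) (integrable_of_mem_Icc Q hφ h01)]
  simp only [integral_const, probReal_univ, smul_eq_mul, mul_one] at hP ⊢
  linarith

/-- The mixture `a P + b Q` of two probability measures. -/
noncomputable def mixture (P Q : ProbabilityMeasure Ω) (a b : ℝ) (ha : 0 ≤ a) (hb : 0 ≤ b)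
    (hab : a + b = 1) : ProbabilityMeasure Ω :=
  ⟨ENNReal.ofReal a • (P : Measure Ω) + ENNReal.ofReal b • (Q : Measure Ω), ⟨by
    simp [← ENNReal.ofReal_add ha hb, hab]⟩⟩

variable (P Q : ProbabilityMeasure Ω) {a b : ℝ} (ha : 0 ≤ a) (hb : 0 ≤ b) (hab : a + b = 1)

lemma toReal_mixture_apply (A : Set Ω) :
    ((mixture P Q a b ha hb hab : Measure Ω) A).toReal =
      a * ((P : Measure Ω) A).toReal + b * ((Q : Measure Ω) A).toReal := by
  simp only [mixture, ProbabilityMeasure.coe_mk, Measure.coe_add, Measure.coe_smul, Pi.add_apply,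
    Pi.smul_apply, smul_eq_mul]
  rw [ENNReal.toReal_add (by finiteness) (by finiteness), ENNReal.toReal_mul, ENNReal.toReal_mul,
    ENNReal.toReal_ofReal ha, ENNReal.toReal_ofReal hb]

lemma integral_mixture {f : Ω → ℝ} (hP : Integrable f (P : Measure Ω))
    (hQ : Integrable f (Q : Measure Ω)) :
    ∫ x, f x ∂(mixture P Q a b ha hb hab : Measure Ω) =
      a * ∫ x, f x ∂(P : Measure Ω) + b * ∫ x, f x ∂(Q : Measure Ω) := by
  simp only [mixture, ProbabilityMeasure.coe_mk]
  rw [integral_add_measure (hP.smul_measure ENNReal.ofReal_ne_top)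
    (hQ.smul_measure ENNReal.ofReal_ne_top), integral_smul_measure, integral_smul_measure,
    ENNReal.toReal_ofReal ha, ENNReal.toReal_ofReal hb, smul_eq_mul, smul_eq_mul]

lemma tv_mixture_le (P' Q' : ProbabilityMeasure Ω) :
    tv (mixture P Q a b ha hb hab : Measure Ω) (mixture P' Q' a b ha hb hab : Measure Ω) ≤
      a * tv (P : Measure Ω) (P' : Measure Ω) + b * tv (Q : Measure Ω) (Q' : Measure Ω) := by
  refine tv_le_of_forall fun A hA => ?_
  have hP := abs_le.1 (abs_measure_sub_le_tv (P : Measure Ω) (P' : Measure Ω) hA)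
  have hQ := abs_le.1 (abs_measure_sub_le_tv (Q : Measure Ω) (Q' : Measure Ω) hA)
  rw [toReal_mixture_apply, toReal_mixture_apply]
  refine abs_le.2 ⟨?_, ?_⟩
  · nlinarith [mul_le_mul_of_nonneg_left hP.1 ha, mul_le_mul_of_nonneg_left hQ.1 hb]
  · nlinarith [mul_le_mul_of_nonneg_left hP.2 ha, mul_le_mul_of_nonneg_left hQ.2 hb]

end TotalVariation

section Duality

variable {Ω : Type*} [MeasurableSpace Ω]

lemma abs_convexCombination_lt {x y a b η : ℝ} (ha : 0 ≤ a) (hb : 0 ≤ b) (hab : a + b = 1)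
    (hx : |x| < η) (hy : |y| < η) : |a * x + b * y| < η := by
  have h := (convex_ball (0 : ℝ) η) (mem_ball_zero_iff.2 hx) (mem_ball_zero_iff.2 hy) ha hb hab
  simpa [mem_ball_zero_iff] using h

/-- The strict hypograph of the affinity as a function of perturbations of the moment
constraints. -/
def perturbedHypograph {ι : Type*} (ψ : ι → Ω → ℝ) (q₀ q₁ : ι → ℝ) (η : ℝ) :
    Set (ℝ × (ι → ℝ) × (ι → ℝ)) :=
  {z | ∃ P₀ P₁ : ProbabilityMeasure Ω, z.1 < 1 - tv (P₀ : Measure Ω) (P₁ : Measure Ω) ∧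
    (∀ k, |z.2.1 k + (∫ x, ψ k x ∂(P₀ : Measure Ω) - q₀ k)| < η) ∧
    ∀ k, |z.2.2 k + (∫ x, ψ k x ∂(P₁ : Measure Ω) - q₁ k)| < η}

lemma isOpen_perturbedHypograph {ι : Type*} [Finite ι] (ψ : ι → Ω → ℝ) (q₀ q₁ : ι → ℝ) (η : ℝ) :
    IsOpen (perturbedHypograph ψ q₀ q₁ η) := by
  simp only [perturbedHypograph, Set.ofPred_exists, Set.ofPred_and, Set.ofPred_forall]
  refine isOpen_iUnion fun P₀ => isOpen_iUnion fun P₁ => .inter ?_ (.inter ?_ ?_)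
  · exact isOpen_lt (by fun_prop) (by fun_prop)
  · exact isOpen_iInter_of_finite fun k => isOpen_lt (by fun_prop) (by fun_prop)
  · exact isOpen_iInter_of_finite fun k => isOpen_lt (by fun_prop) (by fun_prop)

variable [TopologicalSpace Ω] [CompactSpace Ω] [BorelSpace Ω]

lemma integrable_of_continuous_of_compactSpace {f : Ω → ℝ} (hf : Continuous f) (P : Measure Ω)
    [IsFiniteMeasure P] : Integrable f P :=
  hf.integrable_of_hasCompactSupport (HasCompactSupport.of_compactSpace f)

lemma convex_perturbedHypograph {ι : Type*} {ψ : ι → Ω → ℝ} (hψ : ∀ k, Continuous (ψ k))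
    (q₀ q₁ : ι → ℝ) (η : ℝ) : Convex ℝ (perturbedHypograph ψ q₀ q₁ η) := by
  rintro ⟨t, u, v⟩ ⟨P₀, P₁, ht, hu, hv⟩ ⟨t', u', v'⟩ ⟨P₀', P₁', ht', hu', hv'⟩ a b ha hb hab
  have hint : ∀ k (P : ProbabilityMeasure Ω), Integrable (ψ k) (P : Measure Ω) := fun k P =>
    integrable_of_continuous_of_compactSpace (hψ k) _
  refine ⟨mixture P₀ P₀' a b ha hb hab, mixture P₁ P₁' a b ha hb hab, ?_, fun k => ?_, fun k => ?_⟩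
  · have htv := tv_mixture_le P₀ P₀' ha hb hab P₁ P₁'
    have h := (convex_Ioi (0 : ℝ)) (sub_pos.2 ht) (sub_pos.2 ht') ha hb hab
    simp only [Set.mem_Ioi, smul_eq_mul] at h
    simp only [Prod.smul_mk, Prod.mk_add_mk, smul_eq_mul]
    nlinarith
  · rw [integral_mixture _ _ _ _ _ (hint k _) (hint k _)]
    convert abs_convexCombination_lt ha hb hab (hu k) (hu' k) using 2
    simp only [Prod.smul_mk, Prod.mk_add_mk, smul_eq_mul, Pi.add_apply, Pi.smul_apply]
    linear_combination q₀ k * hab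
  · rw [integral_mixture _ _ _ _ _ (hint k _) (hint k _)]
    convert abs_convexCombination_lt ha hb hab (hv k) (hv' k) using 2
    simp only [Prod.smul_mk, Prod.mk_add_mk, smul_eq_mul, Pi.add_apply, Pi.smul_apply]
    linear_combination q₁ k * hab

/-- Lagrange multipliers for the problem of maximizing the affinity under moment constraints. -/
lemma exists_lagrange_multipliers {ι : Type*} [Fintype ι] {ψ : ι → Ω → ℝ}
    (hψ : ∀ k, Continuous (ψ k)) (Q₀ Q₁ : ProbabilityMeasure Ω) {η V : ℝ} (hη : 0 < η)
    (hV1 : V ≤ 1)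
    (hV : ∀ P₀ P₁ : ProbabilityMeasure Ω,
      (∀ k, |∫ x, ψ k x ∂(P₀ : Measure Ω) - ∫ x, ψ k x ∂(Q₀ : Measure Ω)| ≤ η) →
      (∀ k, |∫ x, ψ k x ∂(P₁ : Measure Ω) - ∫ x, ψ k x ∂(Q₁ : Measure Ω)| ≤ η) →
      1 - tv (P₀ : Measure Ω) (P₁ : Measure Ω) ≤ V) :
    ∃ l₀ l₁ : ι → ℝ, ∀ P₀ P₁ : ProbabilityMeasure Ω,
      1 - tv (P₀ : Measure Ω) (P₁ : Measure Ω) + η * (∑ k, |l₀ k| + ∑ k, |l₁ k|) ≤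
        V + ∑ k, l₀ k * (∫ x, ψ k x ∂(P₀ : Measure Ω) - ∫ x, ψ k x ∂(Q₀ : Measure Ω)) +
          ∑ k, l₁ k * (∫ x, ψ k x ∂(P₁ : Measure Ω) - ∫ x, ψ k x ∂(Q₁ : Measure Ω)) := by
  classical
  set q₀ : ι → ℝ := fun k => ∫ x, ψ k x ∂(Q₀ : Measure Ω) with hq₀
  set q₁ : ι → ℝ := fun k => ∫ x, ψ k x ∂(Q₁ : Measure Ω) with hq₁
  have hnot : ((V, 0, 0) : ℝ × (ι → ℝ) × (ι → ℝ)) ∉ perturbedHypograph ψ q₀ q₁ η := by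
    rintro ⟨P₀, P₁, ht, hu, hv⟩
    refine absurd (hV P₀ P₁ (fun k => ?_) fun k => ?_) (not_le.2 ht)
    · simpa using (hu k).le
    · simpa using (hv k).le
  obtain ⟨f, hf⟩ := geometric_hahn_banach_open_point (convex_perturbedHypograph hψ q₀ q₁ η)
    (isOpen_perturbedHypograph ψ q₀ q₁ η) hnot
  set c : ℝ := f (1, 0, 0) with hc
  set m₀ : ι → ℝ := fun k => f (0, Pi.single k 1, 0) with hm₀
  set m₁ : ι → ℝ := fun k => f (0, 0, Pi.single k 1) with hm₁
  have hf_apply : ∀ t u v, f (t, u, v) = t * c + ∑ k, u k * m₀ k + ∑ k, v k * m₁ k := by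
    intro t u v
    have e₁ : ((t, u, v) : ℝ × (ι → ℝ) × (ι → ℝ)) = t • (1, 0, 0) +
        (∑ k, u k • ((0 : ℝ), (Pi.single k (1 : ℝ) : ι → ℝ), (0 : ι → ℝ))) +
        ∑ k, v k • ((0 : ℝ), (0 : ι → ℝ), (Pi.single k (1 : ℝ) : ι → ℝ)) := by
      refine Prod.ext ?_ (Prod.ext ?_ ?_)
      · simp [Prod.fst_sum]
      · ext j
        simp [Prod.fst_sum, Prod.snd_sum, Finset.sum_apply, Pi.single_apply]
      · ext j
        simp [Prod.snd_sum, Finset.sum_apply, Pi.single_apply]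
    rw [e₁]
    simp only [map_add, map_sum, map_smul, smul_eq_mul, hc, hm₀, hm₁]
  have hV0 : f (V, 0, 0) = V * c := by simp [hf_apply]
  have hcpos : 0 < c := by
    have h := hf (V - 2, 0, 0) ⟨Q₀, Q₁, by
      have := tv_le_one (Q₀ : Measure Ω) (Q₁ : Measure Ω)
      simp only
      linarith, fun k => by simpa [hq₀] using hη, fun k => by simpa [hq₁] using hη⟩
    rw [hV0, hf_apply] at h
    simp only [Pi.zero_apply, zero_mul, Finset.sum_const_zero, add_zero] at h
    linarith
  refine ⟨fun k => m₀ k / c, fun k => m₁ k / c, fun P₀ P₁ => ?_⟩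
  set d₀ : ι → ℝ := fun k => ∫ x, ψ k x ∂(P₀ : Measure Ω) - q₀ k
  set d₁ : ι → ℝ := fun k => ∫ x, ψ k x ∂(P₁ : Measure Ω) - q₁ k
  set α : ℝ := 1 - tv (P₀ : Measure Ω) (P₁ : Measure Ω)
  set S : ℝ := ∑ k, |m₀ k| + ∑ k, |m₁ k| with hS
  have hS0 : 0 ≤ S := by positivity
  have hsign : ∀ δ : ℝ, 0 < δ → δ ≤ 1 → ∀ x y : ℝ,
      |(1 - δ) * η * (SignType.sign x : ℝ) - y + y| < η := by
    intro δ h0 h1 x y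
    have hs : |(SignType.sign x : ℝ)| ≤ 1 := by
      rcases lt_trichotomy x 0 with h | h | h <;> simp [h]
    rw [sub_add_cancel, abs_mul, abs_mul, abs_of_nonneg (sub_nonneg.2 h1), abs_of_pos hη]
    calc (1 - δ) * η * |(SignType.sign x : ℝ)| ≤ (1 - δ) * η * 1 :=
          mul_le_mul_of_nonneg_left hs (mul_nonneg (sub_nonneg.2 h1) hη.le)
      _ < η := by nlinarith
  have hsum : ∀ (δ : ℝ) (m e : ι → ℝ),
      ∑ k, ((1 - δ) * η * (SignType.sign (m k) : ℝ) - e k) * m k =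
        (1 - δ) * η * ∑ k, |m k| - ∑ k, m k * e k := by
    intro δ m e
    rw [Finset.mul_sum, ← Finset.sum_sub_distrib]
    refine Finset.sum_congr rfl fun k _ => ?_
    rw [← sign_mul_self (m k)]
    ring
  have hstrict : ∀ δ : ℝ, 0 < δ → δ ≤ 1 →
      (α - δ) * c + (1 - δ) * η * S - ∑ k, m₀ k * d₀ k - ∑ k, m₁ k * d₁ k < V * c := by
    intro δ h0 h1
    have h := hf (α - δ, fun k => (1 - δ) * η * (SignType.sign (m₀ k) : ℝ) - d₀ k,
      fun k => (1 - δ) * η * (SignType.sign (m₁ k) : ℝ) - d₁ k)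
      ⟨P₀, P₁, sub_lt_self _ h0, fun k => hsign δ h0 h1 _ _, fun k => hsign δ h0 h1 _ _⟩
    rw [hV0, hf_apply, hsum, hsum] at h
    rw [hS]
    linarith
  have hlim : α * c + η * S ≤ V * c + ∑ k, m₀ k * d₀ k + ∑ k, m₁ k * d₁ k := by
    refine le_of_forall_pos_le_add fun ε hε => ?_
    have hC : 0 < c + η * S := by positivity
    have h := hstrict (min 1 (ε / (c + η * S))) (lt_min one_pos (div_pos hε hC)) (min_le_left _ _)
    have h' : min 1 (ε / (c + η * S)) * (c + η * S) ≤ ε :=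
      (le_div_iff₀ hC).1 (min_le_right _ _)
    linarith
  have hdiv : ∀ m e : ι → ℝ, ∑ k, m k / c * e k = (∑ k, m k * e k) / c := fun m e => by
    rw [Finset.sum_div]
    exact Finset.sum_congr rfl fun k _ => by ring
  have habs : ∀ m : ι → ℝ, ∑ k, |m k / c| = (∑ k, |m k|) / c := fun m => by
    rw [Finset.sum_div]
    exact Finset.sum_congr rfl fun k _ => by rw [abs_div, abs_of_pos hcpos]
  rw [hdiv, hdiv, habs, habs, ← add_div, ← hS, ← sub_nonneg]
  have key : V + (∑ k, m₀ k * d₀ k) / c + (∑ k, m₁ k * d₁ k) / c - (α + η * (S / c)) =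
      (V * c + ∑ k, m₀ k * d₀ k + ∑ k, m₁ k * d₁ k - (α * c + η * S)) / c := by
    field_simp
  rw [key]
  exact div_nonneg (sub_nonneg.2 hlim) hcpos.le

/-- A test whose worst-case error is at most half of any bound on the affinity. -/
lemma exists_test_bayesError_le {ι : Type*} [Fintype ι] {ψ : ι → Ω → ℝ}
    (hψ : ∀ k, Continuous (ψ k)) (Q₀ Q₁ : ProbabilityMeasure Ω) {η V : ℝ} (hη : 0 < η)
    (hV1 : V ≤ 1)
    (hV : ∀ P₀ P₁ : ProbabilityMeasure Ω,
      (∀ k, |∫ x, ψ k x ∂(P₀ : Measure Ω) - ∫ x, ψ k x ∂(Q₀ : Measure Ω)| ≤ η) →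
      (∀ k, |∫ x, ψ k x ∂(P₁ : Measure Ω) - ∫ x, ψ k x ∂(Q₁ : Measure Ω)| ≤ η) →
      1 - tv (P₀ : Measure Ω) (P₁ : Measure Ω) ≤ V) :
    ∃ φ : Ω → ℝ, Measurable φ ∧ (∀ x, φ x ∈ Set.Icc (0 : ℝ) 1) ∧
      ∀ P₀ P₁ : ProbabilityMeasure Ω,
        (∀ k, |∫ x, ψ k x ∂(P₀ : Measure Ω) - ∫ x, ψ k x ∂(Q₀ : Measure Ω)| ≤ η) →
        (∀ k, |∫ x, ψ k x ∂(P₁ : Measure Ω) - ∫ x, ψ k x ∂(Q₁ : Measure Ω)| ≤ η) →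
        bayesError φ (P₀ : Measure Ω) (P₁ : Measure Ω) ≤ 1 / 2 * V := by
  obtain ⟨l₀, l₁, hl⟩ := exists_lagrange_multipliers hψ Q₀ Q₁ hη hV1 hV
  have hint : ∀ {f : Ω → ℝ}, Continuous f → ∀ P : ProbabilityMeasure Ω,
      Integrable f (P : Measure Ω) := fun hf P => integrable_of_continuous_of_compactSpace hf _
  -- the affine combination of the moment functions attached to multipliers `l` and values `q`
  let g : (ι → ℝ) → ProbabilityMeasure Ω → Ω → ℝ := fun l Q x =>
    ∑ k, l k * (ψ k x - ∫ y, ψ k y ∂(Q : Measure Ω))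
  have hg : ∀ l Q, Continuous (g l Q) := fun l Q => by fun_prop
  have hg_int : ∀ l (Q P : ProbabilityMeasure Ω), ∫ x, g l Q x ∂(P : Measure Ω) =
      ∑ k, l k * (∫ x, ψ k x ∂(P : Measure Ω) - ∫ x, ψ k x ∂(Q : Measure Ω)) := by
    intro l Q P
    rw [integral_finsetSum _ fun k _ => hint (by fun_prop) P]
    refine Finset.sum_congr rfl fun k _ => ?_
    rw [integral_const_mul, integral_sub (hint (hψ k) P) (integrable_const _)]
    simp
  have hg_le : ∀ l (Q P : ProbabilityMeasure Ω),
      (∀ k, |∫ x, ψ k x ∂(P : Measure Ω) - ∫ x, ψ k x ∂(Q : Measure Ω)| ≤ η) →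
      ∫ x, g l Q x ∂(P : Measure Ω) ≤ η * ∑ k, |l k| := by
    intro l Q P hP
    rw [hg_int, Finset.mul_sum]
    refine Finset.sum_le_sum fun k _ => (le_abs_self _).trans ?_
    rw [abs_mul, mul_comm]
    exact mul_le_mul_of_nonneg_right (hP k) (abs_nonneg _)
  set W : ℝ := V - η * (∑ k, |l₀ k| + ∑ k, |l₁ k|) with hW
  have hdual : ∀ P₀ P₁ : ProbabilityMeasure Ω, 1 - tv (P₀ : Measure Ω) (P₁ : Measure Ω) ≤
      W + ∫ x, g l₀ Q₀ x ∂(P₀ : Measure Ω) + ∫ x, g l₁ Q₁ x ∂(P₁ : Measure Ω) := by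
    intro P₀ P₁
    rw [hg_int, hg_int]
    linarith [hl P₀ P₁]
  have hdirac : ∀ x l Q, ∫ y, g l Q y ∂(Measure.dirac x) = g l Q x := fun x l Q =>
    integral_dirac' _ _ (hg l Q).measurable.stronglyMeasurable
  have hpair : ∀ x y, 0 ≤ W + g l₀ Q₀ x + g l₁ Q₁ y := by
    intro x y
    have h := hdual ⟨Measure.dirac x, inferInstance⟩ ⟨Measure.dirac y, inferInstance⟩
    simp only [ProbabilityMeasure.coe_mk, hdirac] at h
    linarith [tv_le_one (Measure.dirac x) (Measure.dirac y)]
  have hdiag : ∀ x, 1 ≤ W + g l₀ Q₀ x + g l₁ Q₁ x := by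
    intro x
    have h := hdual ⟨Measure.dirac x, inferInstance⟩ ⟨Measure.dirac x, inferInstance⟩
    simp only [ProbabilityMeasure.coe_mk, hdirac, tv_self] at h
    linarith
  have : Nonempty Ω := Q₀.nonempty
  obtain ⟨z, -, hz⟩ := isCompact_univ.exists_isMinOn Set.univ_nonempty (hg l₀ Q₀).continuousOn
  have hz : ∀ x, g l₀ Q₀ z ≤ g l₀ Q₀ x := fun x => hz (Set.mem_univ x)
  have hφ : Continuous fun x => min (g l₀ Q₀ x - g l₀ Q₀ z) 1 :=
    ((hg l₀ Q₀).sub continuous_const).min continuous_const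
  refine ⟨fun x => min (g l₀ Q₀ x - g l₀ Q₀ z) 1, hφ.measurable,
    fun x => ⟨le_min (sub_nonneg.2 (hz x)) zero_le_one, min_le_right _ _⟩, fun P₀ P₁ hP₀ hP₁ => ?_⟩
  have h₀ : ∫ x, min (g l₀ Q₀ x - g l₀ Q₀ z) 1 ∂(P₀ : Measure Ω) ≤
      ∫ x, (g l₀ Q₀ x - g l₀ Q₀ z) ∂(P₀ : Measure Ω) :=
    integral_mono (hint hφ P₀) (hint ((hg l₀ Q₀).sub continuous_const) P₀) fun x => min_le_left _ _
  have h₁ : ∫ x, (1 - min (g l₀ Q₀ x - g l₀ Q₀ z) 1) ∂(P₁ : Measure Ω) ≤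
      ∫ x, (g l₁ Q₁ x + (W + g l₀ Q₀ z)) ∂(P₁ : Measure Ω) := by
    refine integral_mono (hint (continuous_const.sub hφ) P₁)
      (hint ((hg l₁ Q₁).add continuous_const) P₁) fun x => ?_
    dsimp only
    rcases min_cases (g l₀ Q₀ x - g l₀ Q₀ z) 1 with h | h <;> rw [h.1]
    · linarith [hdiag x]
    · linarith [hpair z x]
  rw [integral_sub (hint (hg l₀ Q₀) P₀) (integrable_const _)] at h₀
  rw [integral_add (hint (hg l₁ Q₁) P₁) (integrable_const _)] at h₁
  simp only [integral_const, probReal_univ, smul_eq_mul, one_mul] at h₀ h₁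
  have := hg_le l₀ Q₀ P₀ hP₀
  have := hg_le l₁ Q₁ P₁ hP₁
  rw [bayesError]
  linarith

end Duality

/-- The optimal minimax Bayes error equals half the worst-case
affinity `1 − TV(P₀, P₁)` over the uncertainty sets. -/
theorem minimax_eq_half_sup_affinity
    {d : ℕ} (X : Set (EuclideanSpace ℝ (Fin d))) (hX : IsCompact X)
    {K : ℕ} (ψ : Fin K → X → ℝ) (hψ : ∀ k, Continuous (ψ k))
    (Q0 Q1 : ProbabilityMeasure X) (η : ℝ) (hη : 0 < η) :
    sInf {r : ℝ | ∃ φ : X → ℝ, Measurable φ ∧ (∀ x, φ x ∈ Set.Icc (0 : ℝ) 1) ∧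
        r = sSup {e : ℝ | ∃ P0 ∈ momentSet X ψ Q0 η, ∃ P1 ∈ momentSet X ψ Q1 η,
          e = bayesError φ (P0 : Measure X) (P1 : Measure X)}} =
      (1 / 2) * sSup {r : ℝ | ∃ P0 ∈ momentSet X ψ Q0 η, ∃ P1 ∈ momentSet X ψ Q1 η,
        r = 1 - tv (P0 : Measure X) (P1 : Measure X)} := by
  have : CompactSpace X := isCompact_iff_compactSpace.1 hX
  have hQ0 : Q0 ∈ momentSet X ψ Q0 η := fun k => by simpa using hη.le
  have hQ1 : Q1 ∈ momentSet X ψ Q1 η := fun k => by simpa using hη.le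
  set R : Set ℝ := {r : ℝ | ∃ P0 ∈ momentSet X ψ Q0 η, ∃ P1 ∈ momentSet X ψ Q1 η,
    r = 1 - tv (P0 : Measure X) (P1 : Measure X)}
  have hR_le : ∀ r ∈ R, r ≤ 1 := by
    rintro _ ⟨P0, -, P1, -, rfl⟩
    linarith [tv_nonneg (P0 : Measure X) (P1 : Measure X)]
  have hR_ne : R.Nonempty := ⟨_, Q0, hQ0, Q1, hQ1, rfl⟩
  have hlower : ∀ φ : X → ℝ, Measurable φ → (∀ x, φ x ∈ Set.Icc (0 : ℝ) 1) →
      1 / 2 * sSup R ≤ sSup {e : ℝ | ∃ P0 ∈ momentSet X ψ Q0 η, ∃ P1 ∈ momentSet X ψ Q1 η,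
        e = bayesError φ (P0 : Measure X) (P1 : Measure X)} := by
    intro φ hφ h01
    have hbdd : BddAbove {e : ℝ | ∃ P0 ∈ momentSet X ψ Q0 η, ∃ P1 ∈ momentSet X ψ Q1 η,
        e = bayesError φ (P0 : Measure X) (P1 : Measure X)} :=
      ⟨1, by rintro _ ⟨P0, -, P1, -, rfl⟩; exact bayesError_le_one _ _ hφ h01⟩
    rw [← le_div_iff₀' (by norm_num)]
    refine csSup_le hR_ne ?_
    rintro _ ⟨P0, hP0, P1, hP1, rfl⟩
    rw [le_div_iff₀' (by norm_num)]
    exact (half_affinity_le_bayesError _ _ hφ h01).trans (le_csSup hbdd ⟨P0, hP0, P1, hP1, rfl⟩)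
  obtain ⟨φ, hφ, h01, hle⟩ := exists_test_bayesError_le hψ Q0 Q1 hη (csSup_le hR_ne hR_le)
    fun P0 P1 hP0 hP1 => le_csSup ⟨1, hR_le⟩ ⟨P0, hP0, P1, hP1, rfl⟩
  refine IsLeast.csInf_eq ⟨⟨φ, hφ, h01, le_antisymm (hlower φ hφ h01) ?_⟩, ?_⟩
  · refine csSup_le ⟨_, Q0, hQ0, Q1, hQ1, rfl⟩ ?_
    rintro _ ⟨P0, hP0, P1, hP1, rfl⟩
    exact hle P0 P1 hP0 hP1
  · rintro _ ⟨φ, hφ, h01, rfl⟩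
    exact hlower φ hφ h01
end

section
/- For priors π_0 ∈ (0,1) on H_0 and 1 − π_0 on H_1, with error probability P_E^{π_0}(φ; P_0, P_1) = π_0 E_{P_0}[φ] + (1 − π_0) E_{P_1}[1 − φ], the minimax identity inf_φ sup_{P_0 ∈ 𝒫_0^η, P_1 ∈ 𝒫_1^η} P_E^{π_0}(φ; P_0, P_1) = sup_{P_0 ∈ 𝒫_0^η, P_1 ∈ 𝒫_1^η} ∫_X min{π_0 p_0(x), (1 − π_0) p_1(x)} dμ(x) holds, where the infimum is over measurable tests φ : X → [0,1] and p_0, p_1 are densities of P_0, P_1 with respect to a common reference measure μ. -/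
open MeasureTheory

/-- A finite family of continuous convex functions on a compact convex set whose maximum exceeds
`c` everywhere has a convex combination exceeding `c` everywhere. -/
theorem exists_stdSimplex_forall_lt_sum {E ι : Type*} [TopologicalSpace E] [AddCommGroup E]
    [Module ℝ E] [IsTopologicalAddGroup E] [ContinuousSMul ℝ E] [Fintype ι]
    {C : Set E} (hne : C.Nonempty) (hC : Convex ℝ C) (hCc : IsCompact C)
    {g : ι → E → ℝ} (hg : ∀ i, ContinuousOn (g i) C) (hg' : ∀ i, ConvexOn ℝ C (g i))
    {c : ℝ} (h : ∀ x ∈ C, ∃ i, c < g i x) :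
    ∃ w ∈ stdSimplex ℝ ι, ∀ x ∈ C, c < ∑ i, w i * g i x := by
  classical
  obtain ⟨x₀, hx₀⟩ := hne
  obtain ⟨i₀, -⟩ := h x₀ hx₀
  obtain ⟨a, ha, w, hw, hs⟩ := Sion.exists_isSaddlePointOn
    (f := fun x (w : ι → ℝ) => ∑ i, w i * g i x) (Y := stdSimplex ℝ ι) ⟨x₀, hx₀⟩ hC hCc
    (fun w _ => (continuousOn_finsetSum _ fun i _ =>
      continuousOn_const.mul (hg i)).lowerSemicontinuousOn)
    (fun w hw => by
      refine ConvexOn.quasiconvexOn ⟨hC, fun x hx y hy s t hs ht hst => ?_⟩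
      simp only [smul_eq_mul, Finset.mul_sum, ← Finset.sum_add_distrib]
      refine Finset.sum_le_sum fun i _ => ?_
      have := mul_le_mul_of_nonneg_left ((hg' i).2 hx hy hs ht hst) (hw.1 i)
      simp only [smul_eq_mul] at this
      linarith)
    (convex_stdSimplex ℝ ι) ⟨Pi.single i₀ 1, single_mem_stdSimplex ℝ i₀⟩
    (isCompact_stdSimplex ℝ ι)
    (fun x _ => (Continuous.continuousOn (by fun_prop)).upperSemicontinuousOn)
    (fun x _ => by
      refine ConcaveOn.quasiconcaveOn ⟨convex_stdSimplex ℝ ι, fun v _ w _ s t _ _ _ => ?_⟩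
      simp only [smul_eq_mul, Finset.mul_sum, ← Finset.sum_add_distrib]
      refine Finset.sum_le_sum fun i _ => le_of_eq ?_
      simp only [Pi.add_apply, Pi.smul_apply, smul_eq_mul]
      ring)
  refine ⟨w, hw, fun x hx => ?_⟩
  obtain ⟨i, hi⟩ := h a ha
  have := hs x hx (Pi.single i 1) (single_mem_stdSimplex ℝ i)
  simp [Pi.single_apply] at this
  linarith

/-- A version of `exists_stdSimplex_forall_lt_sum` for an arbitrary family: finitely many members
suffice by compactness. -/
theorem exists_finset_stdSimplex_forall_lt_sum {E ι : Type*} [TopologicalSpace E] [AddCommGroup E]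
    [Module ℝ E] [IsTopologicalAddGroup E] [ContinuousSMul ℝ E]
    {C : Set E} (hne : C.Nonempty) (hC : Convex ℝ C) (hCc : IsCompact C)
    {g : ι → E → ℝ} (hg : ∀ i, ContinuousOn (g i) C) (hg' : ∀ i, ConvexOn ℝ C (g i))
    {c : ℝ} (h : ∀ x ∈ C, ∃ i, c < g i x) :
    ∃ (t : Finset ι) (w : t → ℝ), w ∈ stdSimplex ℝ t ∧ ∀ x ∈ C, c < ∑ i, w i * g i x := by
  have : Nonempty ι := let ⟨x, hx⟩ := hne; (h x hx).nonempty
  choose! i hi using h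
  obtain ⟨s, hsC, hs⟩ := hCc.elim_nhdsWithin_subcover (fun x => {y | c < g (i x) y})
    (fun x hx => (hg (i x) x hx).eventually_const_lt (hi x hx))
  classical
  refine ⟨s.image i, exists_stdSimplex_forall_lt_sum (ι := s.image i) (g := fun j => g j)
    hne hC hCc (fun j => hg j) (fun j => hg' j) fun x hx => ?_⟩
  obtain ⟨y, hy, hxy⟩ := Set.mem_iUnion₂.1 (hs hx)
  exact ⟨⟨i y, Finset.mem_image_of_mem i hy⟩, hxy⟩

/-- Every finite convex combination of probability measures is a probability measure. -/
theorem exists_probabilityMeasure_integral_eq_sum {Ω ι : Type*} [MeasurableSpace Ω] [Fintype ι]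
    {w : ι → ℝ} (hw : w ∈ stdSimplex ℝ ι) (P : ι → ProbabilityMeasure Ω) :
    ∃ R : ProbabilityMeasure Ω, (R : Measure Ω) = ∑ i, ENNReal.ofReal (w i) • (P i : Measure Ω) ∧
      ∀ f : Ω → ℝ, (∀ i, Integrable f (P i : Measure Ω)) →
        ∫ x, f x ∂(R : Measure Ω) = ∑ i, w i * ∫ x, f x ∂(P i : Measure Ω) := by
  refine ⟨⟨∑ i, ENNReal.ofReal (w i) • (P i : Measure Ω), ⟨?_⟩⟩, rfl, fun f hf => ?_⟩
  · simp [← ENNReal.ofReal_sum_of_nonneg fun i _ => hw.1 i, hw.2]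
  · rw [ProbabilityMeasure.coe_mk, integral_finsetSum_measure
      fun i _ => (hf i).smul_measure ENNReal.ofReal_ne_top]
    exact Finset.sum_congr rfl fun i _ => by
      rw [integral_smul_measure, ENNReal.toReal_ofReal (hw.1 i), smul_eq_mul]

section Countable

variable {Ω : Type*} [MeasurableSpace Ω] [MeasurableSingletonClass Ω] [Countable Ω]

theorem integrable_of_mem_Icc_zero_one (P : Measure Ω) [IsFiniteMeasure P] {φ : Ω → ℝ}
    (hφ : ∀ x, φ x ∈ Set.Icc (0 : ℝ) 1) : Integrable φ P :=
  .of_mem_Icc 0 1 (measurable_of_countable φ).aemeasurable (.of_forall hφ)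

/-- On a countable space, integration is continuous on `[0, 1]`-valued functions for the topology
of pointwise convergence. -/
theorem continuousOn_integral_Icc_zero_one (P : Measure Ω) [IsFiniteMeasure P] :
    ContinuousOn (fun φ : Ω → ℝ => ∫ x, φ x ∂P) {φ | ∀ x, φ x ∈ Set.Icc (0 : ℝ) 1} := by
  have hsum : Summable fun x => P.real {x} := by
    simpa [Measure.real] using
      ENNReal.summable_toReal (f := fun x => P {x}) (by
        have := lintegral_countable' (μ := P) fun _ => 1
        simp only [lintegral_one, one_mul] at this
        rw [← this]
        exact measure_ne_top P _)
  refine (continuousOn_tsum (f := fun x (φ : Ω → ℝ) => P.real {x} * φ x)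
    (fun x => (by fun_prop : Continuous _).continuousOn) hsum fun x φ hφ => ?_).congr
    fun φ hφ => ?_
  · rw [norm_mul, Real.norm_of_nonneg measureReal_nonneg, Real.norm_of_nonneg (hφ x).1]
    exact mul_le_of_le_one_right measureReal_nonneg (hφ x).2
  · simpa using integral_countable (integrable_of_mem_Icc_zero_one P hφ)

end Countable

/-- The Bayes error of a test with respect to the prior `(π0, 1 - π0)`. -/
noncomputable def testError {Ω : Type*} [MeasurableSpace Ω] (π0 : ℝ) (P0 P1 : Measure Ω)
    (φ : Ω → ℝ) : ℝ :=
  π0 * ∫ x, φ x ∂P0 + (1 - π0) * ∫ x, (1 - φ x) ∂P1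

section TestError

variable {Ω : Type*} [MeasurableSpace Ω] {π0 : ℝ} {P0 P1 : Measure Ω}

theorem testError_mem_Icc [IsProbabilityMeasure P0] [IsProbabilityMeasure P1]
    (hπ0 : π0 ∈ Set.Ioo (0 : ℝ) 1) {φ : Ω → ℝ} (hm : Measurable φ)
    (hφ : ∀ x, φ x ∈ Set.Icc (0 : ℝ) 1) : testError π0 P0 P1 φ ∈ Set.Icc (0 : ℝ) 1 := by
  have key : ∀ (P : Measure Ω) [IsProbabilityMeasure P] (f : Ω → ℝ), Measurable f →
      (∀ x, f x ∈ Set.Icc (0 : ℝ) 1) → ∫ x, f x ∂P ∈ Set.Icc (0 : ℝ) 1 := fun P _ f hf h =>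
    ⟨integral_nonneg fun x => (h x).1, by
      simpa using integral_mono (μ := P) (.of_mem_Icc 0 1 hf.aemeasurable (.of_forall h))
        (integrable_const (1 : ℝ)) (fun x => (h x).2)⟩
  have h0 := key P0 φ hm hφ
  have h1 := key P1 (fun x => 1 - φ x) (measurable_const.sub hm)
    fun x => ⟨by linarith [(hφ x).2], by linarith [(hφ x).1]⟩
  have h2 : 0 < 1 - π0 := by linarith [hπ0.2]
  constructor
  · exact add_nonneg (mul_nonneg hπ0.1.le h0.1) (mul_nonneg h2.le h1.1)
  · unfold testError
    nlinarith [mul_le_mul_of_nonneg_left h0.2 hπ0.1.le, mul_le_mul_of_nonneg_left h1.2 h2.le]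

variable {μ : Measure Ω} [SigmaFinite μ] [IsProbabilityMeasure P0] [IsProbabilityMeasure P1]

theorem testError_eq_integral_rnDeriv (h0 : P0 ≪ μ) (h1 : P1 ≪ μ) {φ : Ω → ℝ}
    (hm : Measurable φ) (hφ : ∀ x, φ x ∈ Set.Icc (0 : ℝ) 1) :
    Integrable (fun x => π0 * (P0.rnDeriv μ x).toReal * φ x
      + (1 - π0) * (P1.rnDeriv μ x).toReal * (1 - φ x)) μ ∧
    testError π0 P0 P1 φ = ∫ x, (π0 * (P0.rnDeriv μ x).toReal * φ x
      + (1 - π0) * (P1.rnDeriv μ x).toReal * (1 - φ x)) ∂μ := by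
  have hint (P : Measure Ω) [IsProbabilityMeasure P] : Integrable φ P :=
    .of_mem_Icc 0 1 hm.aemeasurable (.of_forall hφ)
  have i0 := ((integrable_toReal_rnDeriv_mul_iff h0).2 (hint P0)).const_mul π0
  have i1 := ((integrable_toReal_rnDeriv_mul_iff h1).2
    ((integrable_const (1 : ℝ)).sub (hint P1))).const_mul (1 - π0)
  simp only [Pi.sub_apply] at i1
  simp only [mul_assoc]
  refine ⟨i0.add i1, ?_⟩
  rw [integral_add i0 i1, integral_const_mul, integral_const_mul,
    integral_toReal_rnDeriv_mul h0, integral_toReal_rnDeriv_mul h1, testError]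

theorem integral_min_rnDeriv_le_testError (h0 : P0 ≪ μ) (h1 : P1 ≪ μ) {φ : Ω → ℝ}
    (hm : Measurable φ) (hφ : ∀ x, φ x ∈ Set.Icc (0 : ℝ) 1) :
    ∫ x, min (π0 * (P0.rnDeriv μ x).toReal) ((1 - π0) * (P1.rnDeriv μ x).toReal) ∂μ
      ≤ testError π0 P0 P1 φ := by
  obtain ⟨hi, he⟩ := testError_eq_integral_rnDeriv (π0 := π0) h0 h1 hm hφ
  rw [he]
  refine integral_mono ((Measure.integrable_toReal_rnDeriv.const_mul π0).inf
    (Measure.integrable_toReal_rnDeriv.const_mul (1 - π0))) hi fun x => ?_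
  have ha := min_le_left (π0 * (P0.rnDeriv μ x).toReal) ((1 - π0) * (P1.rnDeriv μ x).toReal)
  have hb := min_le_right (π0 * (P0.rnDeriv μ x).toReal) ((1 - π0) * (P1.rnDeriv μ x).toReal)
  dsimp only
  linarith [mul_le_mul_of_nonneg_right ha (hφ x).1,
    mul_le_mul_of_nonneg_right hb (sub_nonneg.2 (hφ x).2)]

/-- The likelihood ratio test attains the minimal Bayes error. -/
theorem exists_testError_eq_integral_min_rnDeriv (h0 : P0 ≪ μ) (h1 : P1 ≪ μ) :
    ∃ φ : Ω → ℝ, Measurable φ ∧ (∀ x, φ x ∈ Set.Icc (0 : ℝ) 1) ∧ testError π0 P0 P1 φ =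
      ∫ x, min (π0 * (P0.rnDeriv μ x).toReal) ((1 - π0) * (P1.rnDeriv μ x).toReal) ∂μ := by
  classical
  let s : Set Ω := {x | π0 * (P0.rnDeriv μ x).toReal ≤ (1 - π0) * (P1.rnDeriv μ x).toReal}
  have hs : MeasurableSet s := measurableSet_le (by fun_prop) (by fun_prop)
  have hφ : ∀ x, s.indicator (fun _ => (1 : ℝ)) x ∈ Set.Icc (0 : ℝ) 1 := fun x => by
    by_cases h : x ∈ s <;> simp [h]
  have hm : Measurable (s.indicator fun _ => (1 : ℝ)) := measurable_const.indicator hs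
  refine ⟨_, hm, hφ, ?_⟩
  rw [(testError_eq_integral_rnDeriv h0 h1 hm hφ).2]
  refine integral_congr_ae (.of_forall fun x => ?_)
  by_cases h : x ∈ s
  · simpa only [Set.indicator_of_mem h, mul_one, sub_self, mul_zero, add_zero]
      using (min_eq_left h).symm
  · simpa [h] using (not_le.1 h).le

end TestError

section MomentSet

variable {d : ℕ} {X : Set (EuclideanSpace ℝ (Fin d))} {K : ℕ} {ψ : Fin K → X → ℝ}
  {Q : ProbabilityMeasure X} {η : ℝ}

theorem self_mem_momentSet (hη : 0 < η) : Q ∈ momentSet X ψ Q η := fun k => by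
  simpa using hη.le

theorem integrable_of_isCompact_of_continuous (hX : IsCompact X) {f : X → ℝ} (hf : Continuous f)
    (P : ProbabilityMeasure X) : Integrable f (P : Measure X) :=
  have := isCompact_iff_compactSpace.1 hX
  hf.integrable_of_hasCompactSupport (.of_compactSpace f)

theorem mem_momentSet_of_eq_sum (hX : IsCompact X) (hψ : ∀ k, Continuous (ψ k))
    {ι : Type*} [Fintype ι] {w : ι → ℝ} (hw : w ∈ stdSimplex ℝ ι) {P : ι → ProbabilityMeasure X}
    (hP : ∀ i, P i ∈ momentSet X ψ Q η) {R : ProbabilityMeasure X}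
    (hR : ∀ f : X → ℝ, (∀ i, Integrable f (P i : Measure X)) →
      ∫ x, f x ∂(R : Measure X) = ∑ i, w i * ∫ x, f x ∂(P i : Measure X)) :
    R ∈ momentSet X ψ Q η := fun k => by
  rw [hR _ fun i => integrable_of_isCompact_of_continuous hX (hψ k) (P i)]
  calc _ = |∑ i, w i * (∫ x, ψ k x ∂(P i : Measure X) - ∫ x, ψ k x ∂(Q : Measure X))| := by
        simp only [mul_sub, Finset.sum_sub_distrib, ← Finset.sum_mul, hw.2, one_mul]
    _ ≤ ∑ i, |w i * (∫ x, ψ k x ∂(P i : Measure X) - ∫ x, ψ k x ∂(Q : Measure X))| :=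
        Finset.abs_sum_le_sum_abs _ _
    _ ≤ ∑ i, w i * η := Finset.sum_le_sum fun i _ => by
        rw [abs_mul, abs_of_nonneg (hw.1 i)]
        exact mul_le_mul_of_nonneg_left (hP i k) (hw.1 i)
    _ = η := by rw [← Finset.sum_mul, hw.2, one_mul]

/-- Moving a little mass to any point stays inside a moment set of positive radius. -/
theorem exists_mem_momentSet_singleton_ne_zero (hX : IsCompact X) (hψ : ∀ k, Continuous (ψ k))
    (hη : 0 < η) (x : X) : ∃ R ∈ momentSet X ψ Q η, (R : Measure X) {x} ≠ 0 := by
  obtain ⟨M, hM⟩ := (Set.finite_range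
    fun k => |ψ k x - ∫ y, ψ k y ∂(Q : Measure X)|).bddAbove
  obtain ⟨t, ht0, ht1, htM⟩ : ∃ t : ℝ, 0 < t ∧ t ≤ 1 ∧ t * |M| ≤ η := by
    refine ⟨min 1 (η / (|M| + 1)), by positivity, min_le_left _ _, ?_⟩
    have h1 : 0 < |M| + 1 := by positivity
    calc min 1 (η / (|M| + 1)) * |M| ≤ η / (|M| + 1) * (|M| + 1) :=
          mul_le_mul (min_le_right _ _) (by linarith) (abs_nonneg M) (by positivity)
      _ = η := by field_simp
  have hw : ![1 - t, t] ∈ stdSimplex ℝ (Fin 2) := by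
    refine ⟨fun i => ?_, by simp⟩
    fin_cases i <;> simp <;> linarith
  obtain ⟨D, hD⟩ : ∃ D : ProbabilityMeasure X, (D : Measure X) = Measure.dirac x :=
    ⟨⟨Measure.dirac x, inferInstance⟩, rfl⟩
  obtain ⟨R, hR, hRi⟩ := exists_probabilityMeasure_integral_eq_sum hw
    ![Q, D]
  refine ⟨R, fun k => ?_, ?_⟩
  · rw [hRi _ fun i => integrable_of_isCompact_of_continuous hX (hψ k) _]
    simp only [Fin.sum_univ_two, Matrix.cons_val_zero, Matrix.cons_val_one,
      hD, integral_dirac]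
    rw [show (1 - t) * ∫ y, ψ k y ∂(Q : Measure X) + t * ψ k x - ∫ y, ψ k y ∂(Q : Measure X)
      = t * (ψ k x - ∫ y, ψ k y ∂(Q : Measure X)) by ring, abs_mul, abs_of_pos ht0]
    exact (mul_le_mul_of_nonneg_left ((hM ⟨k, rfl⟩).trans (le_abs_self M)) ht0.le).trans htM
  · rw [hR]
    simp [Fin.sum_univ_two, hD, ht0]

/-- A moment set of positive radius is dominated by a σ-finite measure only on a countable
space. -/
theorem countable_of_momentSet_absolutelyContinuous (hX : IsCompact X)
    (hψ : ∀ k, Continuous (ψ k)) (hη : 0 < η) (μ : Measure X) [SigmaFinite μ]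
    (hAC : ∀ P ∈ momentSet X ψ Q η, (P : Measure X) ≪ μ) : Countable X := by
  have h := Measure.countable_meas_pos_of_disjoint_iUnion (μ := μ) (As := fun x : X => {x})
    (fun x => measurableSet_singleton x) fun x y hxy => by simpa using hxy
  refine Set.countable_univ_iff.1 (h.mono fun x _ => ?_)
  obtain ⟨R, hR, hRx⟩ := exists_mem_momentSet_singleton_ne_zero (Q := Q) hX hψ hη x
  exact pos_iff_ne_zero.2 fun h0 => hRx (hAC R hR h0)

/-- If every test has error exceeding `c` at some pair, then a single pair forces error
exceeding `c` on all tests. -/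
theorem exists_forall_lt_testError [Countable X] (hX : IsCompact X) (hψ : ∀ k, Continuous (ψ k))
    {Q0 Q1 : ProbabilityMeasure X} {π0 c : ℝ}
    (h : ∀ φ : X → ℝ, (∀ x, φ x ∈ Set.Icc (0 : ℝ) 1) → ∃ P0 ∈ momentSet X ψ Q0 η,
      ∃ P1 ∈ momentSet X ψ Q1 η, c < testError π0 (P0 : Measure X) P1 φ) :
    ∃ P0 ∈ momentSet X ψ Q0 η, ∃ P1 ∈ momentSet X ψ Q1 η,
      ∀ φ : X → ℝ, (∀ x, φ x ∈ Set.Icc (0 : ℝ) 1) → c < testError π0 (P0 : Measure X) P1 φ := by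
  let C : Set (X → ℝ) := {φ | ∀ x, φ x ∈ Set.Icc (0 : ℝ) 1}
  have hC : C = Set.univ.pi fun _ => Set.Icc (0 : ℝ) 1 := by ext; simp only [C, Set.mem_univ_pi, Set.mem_ofPred_eq]
  have hCc : IsCompact C := hC ▸ isCompact_univ_pi fun _ => isCompact_Icc
  have hCconv : Convex ℝ C := hC ▸ convex_pi fun _ _ => convex_Icc 0 1
  have hsub (φ) (hφ : φ ∈ C) (P : ProbabilityMeasure X) :
      ∫ x, (1 - φ x) ∂(P : Measure X) = 1 - ∫ x, φ x ∂(P : Measure X) := by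
    rw [integral_sub (integrable_const _) (integrable_of_mem_Icc_zero_one _ hφ)]
    simp
  let g : (momentSet X ψ Q0 η × momentSet X ψ Q1 η) → (X → ℝ) → ℝ :=
    fun p φ => testError π0 (p.1.1 : Measure X) p.2.1 φ
  have hgC (p) (φ) (hφ : φ ∈ C) : g p φ = π0 * ∫ x, φ x ∂(p.1.1 : Measure X)
      + (1 - π0) * (1 - ∫ x, φ x ∂(p.2.1 : Measure X)) := by
    simp only [g, testError, hsub φ hφ]
  obtain ⟨t, w, hw, hlt⟩ := exists_finset_stdSimplex_forall_lt_sum (g := g) (c := c)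
    ⟨0, fun x => by simp⟩ hCconv hCc
    (fun p => by
      refine ContinuousOn.congr ?_ (hgC p)
      exact (continuousOn_const.mul (continuousOn_integral_Icc_zero_one _)).add
        (continuousOn_const.mul (continuousOn_const.sub (continuousOn_integral_Icc_zero_one _))))
    (fun p => ⟨hCconv, fun φ hφ χ hχ a b ha hb hab => by
      have hi (P : ProbabilityMeasure X) : ∫ x, (a • φ + b • χ) x ∂(P : Measure X)
          = a * ∫ x, φ x ∂(P : Measure X) + b * ∫ x, χ x ∂(P : Measure X) := by
        simp only [Pi.add_apply, Pi.smul_apply, smul_eq_mul]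
        rw [integral_add ((integrable_of_mem_Icc_zero_one _ hφ).const_mul a)
          ((integrable_of_mem_Icc_zero_one _ hχ).const_mul b), integral_const_mul,
          integral_const_mul]
      rw [hgC p _ (hCconv hφ hχ ha hb hab), hgC p φ hφ, hgC p χ hχ, hi, hi, smul_eq_mul,
        smul_eq_mul]
      refine le_of_eq ?_
      linear_combination (-(1 - π0)) * hab⟩)
    (fun φ hφ => by
      obtain ⟨P0, h0, P1, h1, hlt⟩ := h φ hφ
      exact ⟨(⟨P0, h0⟩, ⟨P1, h1⟩), hlt⟩)
  obtain ⟨R0, -, hR0⟩ := exists_probabilityMeasure_integral_eq_sum hw fun p => p.1.1.1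
  obtain ⟨R1, -, hR1⟩ := exists_probabilityMeasure_integral_eq_sum hw fun p => p.1.2.1
  refine ⟨R0, mem_momentSet_of_eq_sum hX hψ hw (fun p => p.1.1.2) hR0,
    R1, mem_momentSet_of_eq_sum hX hψ hw (fun p => p.1.2.2) hR1, fun φ hφ => ?_⟩
  refine (hlt φ hφ).trans_eq ?_
  rw [testError, hR0 _ fun p => integrable_of_mem_Icc_zero_one _ hφ,
    hR1 (fun x => 1 - φ x) fun p => (integrable_const (1 : ℝ)).sub (integrable_of_mem_Icc_zero_one _ hφ),
    Finset.mul_sum, Finset.mul_sum, ← Finset.sum_add_distrib]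
  refine Finset.sum_congr rfl fun p _ => ?_
  simp only [g, testError]
  ring

end MomentSet

/-- For priors `π₀ ∈ (0,1)` and `1 − π₀`, the minimax error with error
probability `P_E^{π₀}(φ; P₀, P₁) = π₀ E_{P₀}[φ] + (1 − π₀) E_{P₁}[1 − φ]` equals the
worst case of `∫ min{π₀ p₀, (1 − π₀) p₁} dμ`, where `p_i` is the density (Radon–Nikodym
derivative) of `P_i` with respect to the common reference measure `μ`. -/
theorem minimax_unequal_priors
    {d : ℕ} (X : Set (EuclideanSpace ℝ (Fin d))) (hX : IsCompact X)
    {K : ℕ} (ψ : Fin K → X → ℝ) (hψ : ∀ k, Continuous (ψ k))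
    (Q0 Q1 : ProbabilityMeasure X) (η : ℝ) (hη : 0 < η)
    (μ : Measure X) [SigmaFinite μ]
    (hAC : ∀ P : ProbabilityMeasure X,
      P ∈ momentSet X ψ Q0 η ∪ momentSet X ψ Q1 η → (P : Measure X) ≪ μ)
    (π0 : ℝ) (hπ0 : π0 ∈ Set.Ioo (0 : ℝ) 1) :
    sInf {r : ℝ | ∃ φ : X → ℝ, Measurable φ ∧ (∀ x, φ x ∈ Set.Icc (0 : ℝ) 1) ∧
        r = sSup {e : ℝ | ∃ P0 ∈ momentSet X ψ Q0 η, ∃ P1 ∈ momentSet X ψ Q1 η,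
          e = π0 * ∫ x, φ x ∂(P0 : Measure X)
            + (1 - π0) * ∫ x, (1 - φ x) ∂(P1 : Measure X)}} =
      sSup {r : ℝ | ∃ P0 ∈ momentSet X ψ Q0 η, ∃ P1 ∈ momentSet X ψ Q1 η,
        r = ∫ x, min (π0 * ((P0 : Measure X).rnDeriv μ x).toReal)
          ((1 - π0) * ((P1 : Measure X).rnDeriv μ x).toReal) ∂μ} := by
  have hac0 : ∀ P ∈ momentSet X ψ Q0 η, (P : Measure X) ≪ μ := fun P hP => hAC P (.inl hP)
  have hac1 : ∀ P ∈ momentSet X ψ Q1 η, (P : Measure X) ≪ μ := fun P hP => hAC P (.inr hP)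
  have : Countable X := countable_of_momentSet_absolutelyContinuous hX hψ hη μ hac0
  have hbdd (φ : X → ℝ) (hm : Measurable φ) (hφ : ∀ x, φ x ∈ Set.Icc (0 : ℝ) 1) :
      BddAbove {e : ℝ | ∃ P0 ∈ momentSet X ψ Q0 η, ∃ P1 ∈ momentSet X ψ Q1 η,
        e = testError π0 (P0 : Measure X) P1 φ} := by
    refine ⟨1, ?_⟩
    rintro _ ⟨P0, -, P1, -, rfl⟩
    exact (testError_mem_Icc hπ0 hm hφ).2
  have hQ0 : Q0 ∈ momentSet X ψ Q0 η := self_mem_momentSet hη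
  have hQ1 : Q1 ∈ momentSet X ψ Q1 η := self_mem_momentSet hη
  apply le_antisymm
  · by_contra! hlt
    obtain ⟨P0, h0, P1, h1, hP⟩ := exists_forall_lt_testError (π0 := π0) hX hψ fun φ hφ => by
      have hm : Measurable φ := measurable_of_countable φ
      have hle := hlt.trans_le (csInf_le ⟨0, by
        rintro _ ⟨χ, hχm, hχ, rfl⟩
        exact (testError_mem_Icc hπ0 hχm hχ).1.trans
          (le_csSup (hbdd χ hχm hχ) ⟨Q0, hQ0, Q1, hQ1, rfl⟩)⟩ ⟨φ, hm, hφ, rfl⟩)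
      obtain ⟨_, ⟨P0, h0, P1, h1, rfl⟩, he⟩ :=
        exists_lt_of_lt_csSup (by exact ⟨_, Q0, hQ0, Q1, hQ1, rfl⟩) hle
      exact ⟨P0, h0, P1, h1, he⟩
    obtain ⟨φ, -, hφ, he⟩ := exists_testError_eq_integral_min_rnDeriv (π0 := π0)
      (hac0 P0 h0) (hac1 P1 h1)
    refine (hP φ hφ).not_ge (he ▸ le_csSup ⟨1, ?_⟩ ⟨P0, h0, P1, h1, rfl⟩)
    rintro _ ⟨R0, hR0, R1, hR1, rfl⟩
    exact (integral_min_rnDeriv_le_testError (hac0 R0 hR0) (hac1 R1 hR1)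
      (measurable_of_countable φ) hφ).trans
      (testError_mem_Icc hπ0 (measurable_of_countable φ) hφ).2
  · refine csSup_le ⟨_, Q0, hQ0, Q1, hQ1, rfl⟩ ?_
    rintro _ ⟨P0, h0, P1, h1, rfl⟩
    refine le_csInf ⟨_, 0, measurable_const, fun x => by simp, rfl⟩ ?_
    rintro _ ⟨φ, hm, hφ, rfl⟩
    exact (integral_min_rnDeriv_le_testError (hac0 P0 h0) (hac1 P1 h1) hm hφ).trans
      (le_csSup (hbdd φ hm hφ) ⟨P0, h0, P1, h1, rfl⟩)
end

section
/- Let x_1,…,x_s be i.i.d. samples from a probability measure P_0 on X, suppose sup_{x∈X} |ψ_k(x)| ≤ M for all k, and let P̂_s be the empirical distribution of the samples. Assume D(P_0) := Σ_{k=1}^K [(E_{Q̂_1}[ψ_k] − E_{P_0}[ψ_k])² − (E_{Q̂_0}[ψ_k] − E_{P_0}[ψ_k])²] > 0. Then P_0^{⊗s}( Σ_k |E_{P̂_s}[ψ_k] − E_{Q̂_0}[ψ_k]|² ≥ Σ_k |E_{P̂_s}[ψ_k] − E_{Q̂_1}[ψ_k]|² ) ≤ exp( − s D(P_0)² / (8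 M² (Σ_k |E_{Q̂_1}[ψ_k] − E_{Q̂_0}[ψ_k]|)²) ). -/
open MeasureTheory

/-- The **Hoeffding inequality** for the centered sum of a function `f` of i.i.d. samples with
`|f| ≤ B`. -/
lemma measureReal_pi_sum_sub_integral_ge_le {α : Type*} [MeasurableSpace α] (P : Measure α)
    [IsProbabilityMeasure P] {f : α → ℝ} (hf : Measurable f) {B : ℝ} (hB : ∀ x, |f x| ≤ B)
    (s : ℕ) {ε : ℝ} (hε : 0 ≤ ε) :
    (Measure.pi fun _ : Fin s => P).real {ω | ε ≤ ∑ j, (f (ω j) - ∫ x, f x ∂P)} ≤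
      Real.exp (-ε ^ 2 / (2 * (s * B ^ 2))) := by
  have h_indep : ProbabilityTheory.iIndepFun
      (fun (j : Fin s) (ω : Fin s → α) => f (ω j) - ∫ x, f x ∂P)
      (Measure.pi fun _ : Fin s => P) :=
    ProbabilityTheory.iIndepFun_pi (X := fun _ x => f x - ∫ x, f x ∂P)
      fun _ => (hf.sub_const _).aemeasurable
  have h_single := ProbabilityTheory.hasSubgaussianMGF_of_mem_Icc (μ := P) hf.aemeasurable
    (a := -B) (b := B) (Filter.Eventually.of_forall fun x => abs_le.mp (hB x))
  have h_sub (j : Fin s) : ProbabilityTheory.HasSubgaussianMGF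
      (fun ω : Fin s → α => f (ω j) - ∫ x, f x ∂P) ((‖B - -B‖₊ / 2) ^ 2)
      (Measure.pi fun _ : Fin s => P) := by
    have h_eval := measurePreserving_eval (fun _ : Fin s => P) j
    refine ProbabilityTheory.HasSubgaussianMGF.of_map
      (X := fun x => f x - ∫ x, f x ∂P) h_eval.measurable.aemeasurable ?_
    rwa [h_eval.map_eq]
  have h := ProbabilityTheory.HasSubgaussianMGF.measure_sum_ge_le_of_iIndepFun h_indep
    (s := Finset.univ) (fun j _ => h_sub j) hε
  convert h using 4
  have h_abs : |B + B| / 2 = |B| := by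
    rw [← two_mul, abs_mul, abs_two]; ring
  simp [h_abs]

/-- McDiarmid-type bound: for i.i.d. samples `x_1,…,x_s ∼ P₀` with
bounded moment functions `|ψ_k| ≤ M` and
`D(P₀) = ∑_k [(E_{Q̂₁}[ψ_k] − E_{P₀}[ψ_k])² − (E_{Q̂₀}[ψ_k] − E_{P₀}[ψ_k])²] > 0`,
the probability that the empirical moments are closer (in squared distance) to the
nominal moments of `Q̂₁` than to those of `Q̂₀` is at most
`exp(−s D(P₀)² / (8 M² (∑_k |E_{Q̂₁}[ψ_k] − E_{Q̂₀}[ψ_k]|)²))`. -/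
theorem mcdiarmid_moment_bound
    {d : ℕ} (X : Set (EuclideanSpace ℝ (Fin d))) (hX : IsCompact X)
    {K : ℕ} (ψ : Fin K → X → ℝ) (hψ : ∀ k, Continuous (ψ k))
    (M : ℝ) (hM : ∀ k, ∀ x : X, |ψ k x| ≤ M)
    (Q0 Q1 P0 : Measure X)
    [IsProbabilityMeasure Q0] [IsProbabilityMeasure Q1] [IsProbabilityMeasure P0]
    (E0 E1 m : Fin K → ℝ)
    (hE0 : ∀ k, E0 k = ∫ x, ψ k x ∂Q0) (hE1 : ∀ k, E1 k = ∫ x, ψ k x ∂Q1)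
    (hm : ∀ k, m k = ∫ x, ψ k x ∂P0)
    (D : ℝ) (hDdef : D = ∑ k, ((E1 k - m k) ^ 2 - (E0 k - m k) ^ 2)) (hD : 0 < D)
    (s : ℕ) (hs : 0 < s) :
    (Measure.pi fun _ : Fin s => P0)
        {ω : Fin s → X |
          ∑ k, |(s : ℝ)⁻¹ * ∑ j, ψ k (ω j) - E1 k| ^ 2 ≤
            ∑ k, |(s : ℝ)⁻¹ * ∑ j, ψ k (ω j) - E0 k| ^ 2} ≤
      ENNReal.ofReal (Real.exp (-(s : ℝ) * D ^ 2 /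
        (8 * M ^ 2 * (∑ k, |E1 k - E0 k|) ^ 2))) := by
  set L := ∑ k, |E1 k - E0 k|
  set f : X → ℝ := fun x => ∑ k, 2 * (E1 k - E0 k) * ψ k x with hf_def
  have hf : Measurable f :=
    (continuous_finsetSum _ fun k _ => continuous_const.mul (hψ k)).measurable
  have hB (x : X) : |f x| ≤ 2 * M * L := by
    refine (Finset.abs_sum_le_sum_abs _ _).trans ?_
    rw [Finset.mul_sum]
    refine Finset.sum_le_sum fun k _ => ?_
    rw [abs_mul, abs_mul, abs_two]
    nlinarith [mul_le_mul_of_nonneg_left (hM k x) (abs_nonneg (E1 k - E0 k))]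
  have hψ_int (k : Fin K) : Integrable (ψ k) P0 :=
    Integrable.of_bound (hψ k).measurable.aestronglyMeasurable M
      (Filter.Eventually.of_forall (hM k))
  have hf_int : ∫ x, f x ∂P0 = ∑ k, 2 * (E1 k - E0 k) * m k := by
    rw [hf_def, integral_finsetSum _ fun k _ => (hψ_int k).const_mul _]
    simp_rw [integral_const_mul, hm]
  have hs' : (0 : ℝ) < s := by exact_mod_cast hs
  have h_subset : {ω : Fin s → X |
      ∑ k, |(s : ℝ)⁻¹ * ∑ j, ψ k (ω j) - E1 k| ^ 2 ≤
        ∑ k, |(s : ℝ)⁻¹ * ∑ j, ψ k (ω j) - E0 k| ^ 2} ⊆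
      {ω | s * D ≤ ∑ j, (f (ω j) - ∫ x, f x ∂P0)} := by
    intro ω hω
    simp only [Set.mem_ofPred_eq, sq_abs] at hω ⊢
    have h_sum : ∑ j, (f (ω j) - ∫ x, f x ∂P0) =
        s * ∑ k, 2 * (E1 k - E0 k) * ((s : ℝ)⁻¹ * ∑ j, ψ k (ω j) - m k) := by
      rw [Finset.sum_sub_distrib, hf_int, hf_def, Finset.sum_comm, Finset.sum_const,
        Finset.card_univ, Fintype.card_fin, nsmul_eq_mul, Finset.mul_sum, Finset.mul_sum,
        ← Finset.sum_sub_distrib]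
      refine Finset.sum_congr rfl fun k _ => ?_
      rw [← Finset.mul_sum]
      field_simp
    rw [h_sum]
    refine mul_le_mul_of_nonneg_left ?_ hs'.le
    rw [hDdef, ← sub_nonneg, ← Finset.sum_sub_distrib]
    rw [← sub_nonneg, ← Finset.sum_sub_distrib] at hω
    refine hω.trans_eq (Finset.sum_congr rfl fun k _ => ?_)
    ring
  refine (measure_mono h_subset).trans ?_
  rw [← ofReal_measureReal]
  refine ENNReal.ofReal_le_ofReal ((measureReal_pi_sum_sub_integral_ge_le P0 hf hB s
    (mul_nonneg hs'.le hD.le)).trans_eq ?_)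
  congr 1
  rw [show -((s : ℝ) * D) ^ 2 = s * (-(s : ℝ) * D ^ 2) by ring,
    show 2 * ((s : ℝ) * (2 * M * L) ^ 2) = s * (8 * M ^ 2 * L ^ 2) by ring,
    mul_div_mul_left _ _ hs'.ne']
end
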